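/- Let n ≥ 1, let x, y, d ∈ ℝ^n with d > 0 entrywise, and let x₊, x₋, y₊, y₋ ≥ 0 be real numbers. If ∑_i x_i + x₊ − x₋ = ∑_i y_i + y₊ − y₋ and ‖d_i·x − y_i·d‖₁ + d_i·(x₊ + x₋) ≤ ‖d_i·y − y_i·d‖₁ + d_i·(y₊ + y₋) for all i = 1,…,n, then x₋ ≤ y₋ and x₊ ≤ y₊. Here ‖·‖₁ is the vector 1-norm. -/

import Mathlib

open Finset

/-!
If `i` minimises the ratio `y i / d i`, then every entry of `d i • y - y i • d` is nonnegative, so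
its 1-norm is its sum, while the 1-norm of `d i • x - y i • d` is at least the sum of its entries.
Subtracting, the terms in `y i • d` cancel, so the `i`-th inequality bounds `∑ x - ∑ y`. Replacing
`x` and `y` by their negatives bounds `∑ y - ∑ x` in the same way.
-/

theorem sum_abs_sub_sum_abs_le_sum_sub {ι G : Type*} [AddCommGroup G] [LinearOrder G]
    [IsOrderedAddMonoid G] {s : Finset ι} {a : ι → G} (ha : ∀ j ∈ s, 0 ≤ a j) (b : ι → G) :
    ∑ j ∈ s, |a j| - ∑ j ∈ s, |b j| ≤ ∑ j ∈ s, (a j - b j) := by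
  rw [← sum_sub_distrib]
  refine sum_le_sum fun j hj => ?_
  rw [abs_of_nonneg (ha j hj)]
  exact sub_le_sub_left (le_abs_self _) _

section WeightedVectors

variable {ι K : Type*} [Field K] [LinearOrder K] [IsStrictOrderedRing K] {d : ι → K}

theorem exists_forall_mul_le_mul_of_pos [Finite ι] [Nonempty ι] (hd : ∀ i, 0 < d i) (y : ι → K) :
    ∃ i, ∀ j, y i * d j ≤ d i * y j := by
  obtain ⟨i, hi⟩ := Finite.exists_min fun j => y j / d j
  refine ⟨i, fun j => ?_⟩
  rw [mul_comm (d i)]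
  exact (div_le_div_iff₀ (hd i) (hd j)).mp (hi j)

variable [Fintype ι] [Nonempty ι] {x y : ι → K}

theorem sum_sub_sum_le_of_sum_abs_le {t : K} (hd : ∀ i, 0 < d i)
    (h : ∀ i, ∑ j, |d i * x j - y i * d j| ≤ ∑ j, |d i * y j - y i * d j| + d i * t) :
    ∑ j, x j - ∑ j, y j ≤ t := by
  obtain ⟨i, hi⟩ := exists_forall_mul_le_mul_of_pos hd y
  have sum_abs_sub_le : ∑ j, |d i * y j - y i * d j| - ∑ j, |d i * x j - y i * d j| ≤
      d i * (∑ j, y j - ∑ j, x j) :=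
    calc
      _ ≤ ∑ j, ((d i * y j - y i * d j) - (d i * x j - y i * d j)) :=
        sum_abs_sub_sum_abs_le_sum_sub (fun j _ => sub_nonneg.mpr (hi j)) _
      _ = d i * (∑ j, y j - ∑ j, x j) := by
        simp only [sub_sub_sub_cancel_right, sum_sub_distrib, ← mul_sum, ← mul_sub]
  refine le_of_mul_le_mul_left ?_ (hd i)
  linarith [h i]

theorem abs_sum_sub_sum_le_of_sum_abs_le {t : K} (hd : ∀ i, 0 < d i)
    (h : ∀ i, ∑ j, |d i * x j - y i * d j| ≤ ∑ j, |d i * y j - y i * d j| + d i * t) :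
    |∑ j, x j - ∑ j, y j| ≤ t := by
  have abs_neg_entry (v : ι → K) (i j : ι) :
      |d i * (-v) j - (-y) i * d j| = |d i * v j - y i * d j| := by
    rw [Pi.neg_apply, Pi.neg_apply, mul_neg, neg_mul, neg_sub_neg, abs_sub_comm]
  have neg_sum_le : ∑ j, (-x) j - ∑ j, (-y) j ≤ t :=
    sum_sub_sum_le_of_sum_abs_le hd (by simpa only [abs_neg_entry] using h)
  simp only [Pi.neg_apply, sum_neg_distrib, neg_sub_neg] at neg_sum_le
  exact abs_sub_le_iff.mpr ⟨sum_sub_sum_le_of_sum_abs_le hd h, neg_sum_le⟩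

theorem stmt15_general (hd : ∀ i, 0 < d i) {xp xm yp ym : K}
    (hsum : (∑ i, x i) + xp - xm = (∑ i, y i) + yp - ym)
    (hineq : ∀ i, (∑ j, |d i * x j - y i * d j|) + d i * (xp + xm) ≤
      (∑ j, |d i * y j - y i * d j|) + d i * (yp + ym)) :
    xm ≤ ym ∧ xp ≤ yp := by
  have abs_sum_le : |∑ j, x j - ∑ j, y j| ≤ (yp + ym) - (xp + xm) :=
    abs_sum_sub_sum_le_of_sum_abs_le hd fun i => by linarith [hineq i]
  obtain ⟨sum_x_le, sum_y_le⟩ := abs_sub_le_iff.mp abs_sum_le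
  constructor <;> linarith

end WeightedVectors

/-- Lemma on 1-norm inequalities with correction terms (Lemma A.1). -/
theorem stmt15 (n : ℕ) (hn : 1 ≤ n) (x y d : Fin n → ℝ) (hd : ∀ i, 0 < d i)
    (xp xm yp ym : ℝ) (hxp : 0 ≤ xp) (hxm : 0 ≤ xm) (hyp : 0 ≤ yp) (hym : 0 ≤ ym)
    (hsum : (∑ i, x i) + xp - xm = (∑ i, y i) + yp - ym)
    (hineq : ∀ i, (∑ j, |d i * x j - y i * d j|) + d i * (xp + xm) ≤
      (∑ j, |d i * y j - y i * d j|) + d i * (yp + ym)) :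
    xm ≤ ym ∧ xp ≤ yp := by
  have : Nonempty (Fin n) := Fin.pos_iff_nonempty.mp hn
  exact stmt15_general hd hsum hineq
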